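/- Suppose the discount function satisfies δ(i)δ(j) ≤ δ(i+j) for all i,j ∈ ℕ. Then for any nonempty Borel set S ⊆ 𝕏 with Θ(S) ⊆ S, the set S_∞ := ∩_{n=1}^∞ Θⁿ(S) is nonempty and is an equilibrium, i.e. Θ(S_∞) = S_∞. -/

import Mathlib

/-!
The heart of the proof is the inequality `J(x, ρ(x,S)) ≤ J(x, ρ(x,Θ S))`, valid for every `x` as
soon as `R := Θ S ⊆ S` (`valJ_le_valJ_Θ`). To prove it, stop in `R` before a deterministic time `N`
and in `S` from time `N` on. For `N = 1` this is the first visit of `S`; as `N → ∞` the payoff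
becomes that of the first visit of `R`, up to an error `δ N · sup f → 0`. Passing from `N` to
`N + 1` changes something only on the event that the chain is in `S \ R` at time `N` and has avoided
`R` before. There `f (X_N) < J(X_N, ρ(X_N, S))`, and by the Markov property at time `N` together with
`δ N * δ k ≤ δ (N + k)`, continuing to the next visit of `S` does not decrease the expected payoff
(`integral_switch_le_succ`). Switching at deterministic times means that no strong Markov property
is needed; the ordinary one for functionals of the whole future (`setIntegral_shift`) follows from
the one-step property because a law on path space is determined by its initial law and its one-step
transitions (`measure_eq_of_markov`).

Consequently `Θ (Θ S) ⊆ Θ S`, so the iterates decrease and the values `J(x, ρ(x, Θⁿ S))` increase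
with `n`. Since hitting times of a decreasing sequence of sets increase to the hitting time of the
intersection, and late payoffs are negligible, dominated convergence identifies the limit of these
values as `J(x, ρ(x, S_∞))` (`tendsto_targetPayoff_iInter`). Hence `x ∈ Θ S_∞` iff `x` lies in all
iterates, that is, `Θ S_∞ = S_∞`. Finally `S_∞` is nonempty because `Θ ∅` is the whole space.
-/

open MeasureTheory ProbabilityTheory Set Filter Topology
open scoped ENNReal ENat

noncomputable section

/-- The σ-algebra generated by the first `n+1` coordinates of the path space:
the natural filtration of the coordinate process at time `n`. -/
def pathSigma (𝕏 : Type*) [m : MeasurableSpace 𝕏] (n : ℕ) : MeasurableSpace (ℕ → 𝕏) :=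
  ⨆ i ∈ Finset.range (n + 1), MeasurableSpace.comap (fun ω : ℕ → 𝕏 => ω i) m

/-- `Pr` is the family of laws of the time-homogeneous Markov chain with one-step
transition kernel `Q`: under `Pr x` the chain starts at `x`, and the Markov property
`Pr^x(X_{n+1} ∈ A | 𝓕_n) = Q(X_n, A)` holds. -/
structure IsMarkovChainLaw {𝕏 : Type*} [MeasurableSpace 𝕏]
    (Pr : Kernel 𝕏 (ℕ → 𝕏)) (Q : Kernel 𝕏 𝕏) : Prop where
  start : ∀ x : 𝕏, Pr x {ω | ω 0 = x} = 1
  markov : ∀ (x : 𝕏) (n : ℕ) (B : Set (ℕ → 𝕏)), MeasurableSet[pathSigma 𝕏 n] B →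
    ∀ A : Set 𝕏, MeasurableSet A →
      Pr x (B ∩ {ω | ω (n + 1) ∈ A}) = ∫⁻ ω in B, Q (ω n) A ∂(Pr x)

/-- The first hitting time `ρ(x,S) = inf {t ≥ 1 : X_t ∈ S}` along the path `ω`
(equal to `⊤` if `S` is never reached at a time `≥ 1`). -/
def hitTime {𝕏 : Type*} (S : Set 𝕏) (ω : ℕ → 𝕏) : ℕ∞ :=
  sInf {n : ℕ∞ | ∃ t : ℕ, n = (t : ℕ∞) ∧ 1 ≤ t ∧ ω t ∈ S}

/-- The discounted payoff `δ(ρ(x,S)) f(X_{ρ(x,S)})` collected along the path `ω`,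
with the convention that it vanishes when `S` is never hit. -/
def stopPayoff {𝕏 : Type*} (δ : ℕ → ℝ) (f : 𝕏 → ℝ) (S : Set 𝕏) (ω : ℕ → 𝕏) : ℝ :=
  if hitTime S ω = ⊤ then 0
  else δ (hitTime S ω).toNat * f (ω (hitTime S ω).toNat)

/-- The objective value `J(x, ρ(x,S)) = 𝔼^x[δ(ρ(x,S)) f(X_{ρ(x,S)})]`. -/
def valJ {𝕏 : Type*} [MeasurableSpace 𝕏] (Pr : Kernel 𝕏 (ℕ → 𝕏)) (δ : ℕ → ℝ) (f : 𝕏 → ℝ)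
    (S : Set 𝕏) (x : 𝕏) : ℝ :=
  ∫ ω, stopPayoff δ f S ω ∂(Pr x)

/-- The operator `Θ(S) = {x ∈ 𝕏 : f(x) ≥ J(x, ρ(x,S))}`. -/
def Θ {𝕏 : Type*} [MeasurableSpace 𝕏] (Pr : Kernel 𝕏 (ℕ → 𝕏)) (δ : ℕ → ℝ) (f : 𝕏 → ℝ)
    (S : Set 𝕏) : Set 𝕏 :=
  {x | valJ Pr δ f S x ≤ f x}

/-- A Borel set `S ⊆ 𝕏` is an equilibrium if `Θ(S) = S`. -/
def IsEquilibrium {𝕏 : Type*} [MeasurableSpace 𝕏] (Pr : Kernel 𝕏 (ℕ → 𝕏)) (δ : ℕ → ℝ)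
    (f : 𝕏 → ℝ) (S : Set 𝕏) : Prop :=
  MeasurableSet S ∧ Θ Pr δ f S = S

/-- The value `V(x,S) = max (f x) (J(x, ρ(x,S)))` associated with an equilibrium `S`. -/
def valV {𝕏 : Type*} [MeasurableSpace 𝕏] (Pr : Kernel 𝕏 (ℕ → 𝕏)) (δ : ℕ → ℝ) (f : 𝕏 → ℝ)
    (S : Set 𝕏) (x : 𝕏) : ℝ :=
  max (f x) (valJ Pr δ f S x)

/-! ### The Markov property for the whole future -/

section MarkovProperty

variable {𝕏 : Type*} [MeasurableSpace 𝕏]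

lemma measurable_coord_pathSigma {n i : ℕ} (h : i ≤ n) :
    Measurable[pathSigma 𝕏 n] (fun ω : ℕ → 𝕏 => ω i) := by
  rw [measurable_iff_comap_le]
  exact le_iSup₂_of_le i (Finset.mem_range.2 (by omega)) le_rfl

lemma pathSigma_le (n : ℕ) : pathSigma 𝕏 n ≤ MeasurableSpace.pi :=
  iSup₂_le fun i _ => measurable_iff_comap_le.1 (measurable_pi_apply i)

lemma pathSigma_mono {m n : ℕ} (h : m ≤ n) : pathSigma 𝕏 m ≤ pathSigma 𝕏 n :=
  iSup₂_le fun _ hi => measurable_iff_comap_le.1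
    (measurable_coord_pathSigma (by have := Finset.mem_range.1 hi; omega))

lemma measurable_shift_pathSigma (n k : ℕ) :
    Measurable[pathSigma 𝕏 (n + k), pathSigma 𝕏 k] (fun (ω : ℕ → 𝕏) (j : ℕ) => ω (n + j)) := by
  rw [measurable_iff_comap_le]
  simp only [pathSigma, MeasurableSpace.comap_iSup, MeasurableSpace.comap_comp]
  refine iSup₂_le fun i hi => ?_
  have := Finset.mem_range.1 hi
  exact le_iSup₂_of_le (n + i) (Finset.mem_range.2 (by omega)) le_rfl

/-- A finite measure on path space is determined by its initial law and its one-step transition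
kernel. -/
lemma measure_eq_of_markov {Q : Kernel 𝕏 𝕏} {μ ν : Measure (ℕ → 𝕏)} [IsFiniteMeasure μ]
    (h0 : ∀ A, MeasurableSet A → μ {ω | ω 0 ∈ A} = ν {ω | ω 0 ∈ A})
    (hμ : ∀ (k : ℕ) (B : Set (ℕ → 𝕏)), MeasurableSet[pathSigma 𝕏 k] B → ∀ A, MeasurableSet A →
      μ (B ∩ {ω | ω (k + 1) ∈ A}) = ∫⁻ ω in B, Q (ω k) A ∂μ)
    (hν : ∀ (k : ℕ) (B : Set (ℕ → 𝕏)), MeasurableSet[pathSigma 𝕏 k] B → ∀ A, MeasurableSet A →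
      ν (B ∩ {ω | ω (k + 1) ∈ A}) = ∫⁻ ω in B, Q (ω k) A ∂ν) : μ = ν := by
  have huniv : μ univ = ν univ := by simpa using h0 univ MeasurableSet.univ
  have key : ∀ k, ∀ B, MeasurableSet[pathSigma 𝕏 k] B → μ B = ν B := by
    intro k
    induction k with
    | zero =>
      intro B hB
      have : pathSigma 𝕏 0 = MeasurableSpace.comap (fun ω : ℕ → 𝕏 => ω 0) inferInstance := by
        simp [pathSigma]
      rw [this] at hB
      obtain ⟨A, hA, rfl⟩ := hB
      exact h0 A hA
    | succ k ih =>
      have htrim : μ.trim (pathSigma_le k) = ν.trim (pathSigma_le k) := by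
        refine @Measure.ext _ (pathSigma 𝕏 k) _ _ fun s hs => ?_
        rw [trim_measurableSet_eq _ hs, trim_measurableSet_eq _ hs, ih s hs]
      have hint : ∀ B, MeasurableSet[pathSigma 𝕏 k] B → ∀ A, MeasurableSet A →
          ∫⁻ ω in B, Q (ω k) A ∂μ = ∫⁻ ω in B, Q (ω k) A ∂ν := by
        intro B hB A hA
        have hm : Measurable[pathSigma 𝕏 k] (B.indicator fun ω : ℕ → 𝕏 => Q (ω k) A) :=
          Measurable.indicator
            ((Q.measurable_coe hA).comp (measurable_coord_pathSigma le_rfl)) hB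
        rw [← lintegral_indicator (pathSigma_le k _ hB), ← lintegral_indicator (pathSigma_le k _ hB),
          ← lintegral_trim (pathSigma_le k) hm, htrim, lintegral_trim (pathSigma_le k) hm]
      let C : Set (Set (ℕ → 𝕏)) := {s | ∃ B, MeasurableSet[pathSigma 𝕏 k] B ∧
        ∃ A : Set 𝕏, MeasurableSet A ∧ s = B ∩ {ω | ω (k + 1) ∈ A}}
      have hCgen : pathSigma 𝕏 (k + 1) = MeasurableSpace.generateFrom C := by
        apply le_antisymm
        · refine iSup₂_le fun i hi => ?_
          rintro s ⟨A, hA, rfl⟩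
          apply MeasurableSpace.measurableSet_generateFrom
          rcases (Nat.lt_succ_iff.1 (Finset.mem_range.1 hi)).eq_or_lt with rfl | hlt
          · exact ⟨univ, MeasurableSet.univ, A, hA, by ext; simp⟩
          · exact ⟨_, measurable_coord_pathSigma (Nat.lt_succ_iff.1 hlt) hA, univ,
              MeasurableSet.univ, by ext; simp⟩
        · refine MeasurableSpace.generateFrom_le ?_
          rintro s ⟨B, hB, A, hA, rfl⟩
          exact MeasurableSet.inter (pathSigma_mono (Nat.le_succ k) _ hB)
            (measurable_coord_pathSigma le_rfl hA)
      have hCpi : IsPiSystem C := by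
        rintro _ ⟨B, hB, A, hA, rfl⟩ _ ⟨B', hB', A', hA', rfl⟩ _
        refine ⟨B ∩ B', MeasurableSet.inter hB hB', A ∩ A', hA.inter hA', ?_⟩
        ext ω
        simp only [mem_inter_iff, mem_ofPred_eq]
        tauto
      intro s hs
      refine ext_on_measurableSpace_of_generate_finite MeasurableSpace.pi C ?_
        (pathSigma_le (k + 1)) hCgen hCpi huniv hs
      rintro _ ⟨B, hB, A, hA, rfl⟩
      rw [hμ k B hB A hA, hν k B hB A hA, hint B hB A hA]
  refine ext_of_generate_finite (⋃ k, {B | MeasurableSet[pathSigma 𝕏 k] B}) ?_ ?_ ?_ huniv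
  · apply le_antisymm
    · refine iSup_le fun i => ?_
      rintro s ⟨A, hA, rfl⟩
      exact MeasurableSpace.measurableSet_generateFrom
        (mem_iUnion.2 ⟨i, measurable_coord_pathSigma le_rfl hA⟩)
    · refine MeasurableSpace.generateFrom_le fun s hs => ?_
      obtain ⟨k, hk⟩ := mem_iUnion.1 hs
      exact pathSigma_le k s hk
  · exact isPiSystem_iUnion_of_monotone _
      (fun k => @MeasurableSpace.isPiSystem_measurableSet _ (pathSigma 𝕏 k))
      (fun m n h s hs => pathSigma_mono h s hs)
  · intro s hs
    obtain ⟨k, hk⟩ := mem_iUnion.1 hs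
    exact key k s hk

/-- The Markov property at a fixed time `n`: on an event `B` of the past, the law of the shifted
path is the law of the chain restarted from `X_n`. -/
lemma map_shift_eq_bind {Pr : Kernel 𝕏 (ℕ → 𝕏)} [IsMarkovKernel Pr] {Q : Kernel 𝕏 𝕏}
    (hchain : IsMarkovChainLaw Pr Q) (x : 𝕏) (n : ℕ) {B : Set (ℕ → 𝕏)}
    (hB : MeasurableSet[pathSigma 𝕏 n] B) :
    ((Pr x).restrict B).map (fun (ω : ℕ → 𝕏) (j : ℕ) => ω (n + j)) =
      ((Pr x).restrict B).bind (Pr.comap (fun ω : ℕ → 𝕏 => ω n) (measurable_pi_apply n)) := by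
  have hθ : Measurable (fun (ω : ℕ → 𝕏) (j : ℕ) => ω (n + j)) :=
    measurable_pi_lambda _ fun j => measurable_pi_apply _
  set κ := Pr.comap (fun ω : ℕ → 𝕏 => ω n) (measurable_pi_apply n) with hκ
  have hBm := pathSigma_le n _ hB
  refine measure_eq_of_markov (Q := Q) ?_ ?_ ?_
  · intro A hA
    have hm : MeasurableSet {ω : ℕ → 𝕏 | ω 0 ∈ A} := measurable_pi_apply 0 hA
    rw [Measure.map_apply hθ hm, Measure.bind_apply hm κ.measurable.aemeasurable]
    -- The chain restarted from `y` starts at `y`, so it lies in `A` at time `0` iff `y ∈ A`.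
    have hstart : ∀ y, Pr y {ω | ω 0 ∈ A} = A.indicator 1 y := by
      intro y
      by_cases hy : y ∈ A
      · rw [indicator_of_mem hy]
        refine le_antisymm prob_le_one ?_
        rw [Pi.one_apply, ← hchain.start y]
        exact measure_mono fun ω (h : ω 0 = y) => by simpa [h] using hy
      · rw [indicator_of_notMem hy]
        have hc : Pr y {ω | ω 0 ∈ A}ᶜ = 1 := by
          refine le_antisymm prob_le_one ?_
          rw [← hchain.start y]
          exact measure_mono fun ω (h : ω 0 = y) => by simpa [h] using hy
        exact (prob_compl_eq_one_iff hm).1 hc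
    have hA' : MeasurableSet {ω : ℕ → 𝕏 | ω n ∈ A} := measurable_pi_apply n hA
    have : ∀ ω : ℕ → 𝕏, κ ω {ω | ω 0 ∈ A} = {ω : ℕ → 𝕏 | ω n ∈ A}.indicator 1 ω := by
      intro ω
      rw [hκ, Kernel.comap_apply, hstart]
      rfl
    simp_rw [this]
    rw [lintegral_indicator_one hA']
    rfl
  · intro k C hC A hA
    have hCm := pathSigma_le k _ hC
    have hAm : MeasurableSet {ω : ℕ → 𝕏 | ω (k + 1) ∈ A} := measurable_pi_apply (k + 1) hA
    have hC' := measurable_shift_pathSigma n k hC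
    have hg : Measurable (fun ω : ℕ → 𝕏 => Q (ω k) A) :=
      (Q.measurable_coe hA).comp (measurable_pi_apply k)
    rw [Measure.map_apply hθ (hCm.inter hAm), Measure.restrict_apply (hθ (hCm.inter hAm)),
      setLIntegral_map hCm hg hθ, Measure.restrict_restrict (hθ hCm),
      ← hchain.markov x (n + k) _
        (MeasurableSet.inter hC' (pathSigma_mono (Nat.le_add_right n k) _ hB)) A hA]
    congr 1
    ext ω
    simp only [mem_inter_iff, mem_preimage, mem_ofPred_eq, add_assoc]
    tauto
  · intro k C hC A hA
    have hCm := pathSigma_le k _ hC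
    have hAm : MeasurableSet {ω : ℕ → 𝕏 | ω (k + 1) ∈ A} := measurable_pi_apply (k + 1) hA
    have hg : Measurable (fun ω : ℕ → 𝕏 => Q (ω k) A) :=
      (Q.measurable_coe hA).comp (measurable_pi_apply k)
    rw [Measure.bind_apply (hCm.inter hAm) κ.measurable.aemeasurable, ← lintegral_indicator hCm,
      Measure.lintegral_bind κ.measurable.aemeasurable (hg.indicator hCm).aemeasurable]
    refine lintegral_congr fun ω => ?_
    rw [lintegral_indicator hCm, hκ, Kernel.comap_apply]
    exact hchain.markov (ω n) k C hC A hA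

/-- The Markov property at a fixed time, for bounded functionals of the future. -/
lemma setIntegral_shift {Pr : Kernel 𝕏 (ℕ → 𝕏)} [IsMarkovKernel Pr] {Q : Kernel 𝕏 𝕏}
    (hchain : IsMarkovChainLaw Pr Q) (x : 𝕏) (n : ℕ) {B : Set (ℕ → 𝕏)}
    (hB : MeasurableSet[pathSigma 𝕏 n] B) {Φ : (ℕ → 𝕏) → ℝ} (hΦ : Measurable Φ)
    {C : ℝ} (hC : ∀ ω, |Φ ω| ≤ C) :
    ∫ ω in B, Φ (fun j => ω (n + j)) ∂(Pr x) = ∫ ω in B, (∫ η, Φ η ∂(Pr (ω n))) ∂(Pr x) := by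
  have hθ : Measurable (fun (ω : ℕ → 𝕏) (j : ℕ) => ω (n + j)) :=
    measurable_pi_lambda _ fun j => measurable_pi_apply _
  rw [← integral_map (f := Φ) hθ.aemeasurable hΦ.aestronglyMeasurable, map_shift_eq_bind hchain x n hB,
    Measure.comp_eq_comp_const_apply, Kernel.integral_comp]
  · simp
  · exact Integrable.of_bound hΦ.aestronglyMeasurable C (ae_of_all _ hC)

end MarkovProperty

/-! ### Payoffs of time-dependent targets -/

section Payoff

variable {𝕏 : Type*}

/-- The event that `t` is the first time `≥ 1` at which the path lies in the time-dependent
target `D`. -/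
def firstHit (D : ℕ → Set 𝕏) (t : ℕ) : Set (ℕ → 𝕏) :=
  {ω | 1 ≤ t ∧ ω t ∈ D t ∧ ∀ s, 1 ≤ s → s < t → ω s ∉ D s}

open Classical in
/-- The discounted payoff collected at the first time `≥ 1` at which the path lies in the
time-dependent target `D`, and `0` if there is no such time. -/
def targetPayoff (δ : ℕ → ℝ) (f : 𝕏 → ℝ) (D : ℕ → Set 𝕏) (ω : ℕ → 𝕏) : ℝ :=
  if h : ∃ t, ω ∈ firstHit D t then δ h.choose * f (ω h.choose) else 0

variable {δ : ℕ → ℝ} {f : 𝕏 → ℝ} {D : ℕ → Set 𝕏} {ω : ℕ → 𝕏} {t : ℕ}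

lemma firstHit_unique {t' : ℕ} (h : ω ∈ firstHit D t) (h' : ω ∈ firstHit D t') : t = t' := by
  rcases lt_trichotomy t t' with hlt | rfl | hlt
  · exact absurd h.2.1 (h'.2.2 t h.1 hlt)
  · rfl
  · exact absurd h'.2.1 (h.2.2 t' h'.1 hlt)

lemma exists_firstHit (ht : 1 ≤ t) (h : ω t ∈ D t) : ∃ s, ω ∈ firstHit D s := by
  classical
  have hex : ∃ s, 1 ≤ s ∧ ω s ∈ D s := ⟨t, ht, h⟩
  exact ⟨Nat.find hex, (Nat.find_spec hex).1, (Nat.find_spec hex).2,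
    fun s h1 hs hm => Nat.find_min hex hs ⟨h1, hm⟩⟩

lemma targetPayoff_of_firstHit (h : ω ∈ firstHit D t) :
    targetPayoff δ f D ω = δ t * f (ω t) := by
  have hex : ∃ t, ω ∈ firstHit D t := ⟨t, h⟩
  rw [targetPayoff, dif_pos hex, firstHit_unique hex.choose_spec h]

lemma targetPayoff_of_never (h : ¬ ∃ t, ω ∈ firstHit D t) : targetPayoff δ f D ω = 0 := by
  rw [targetPayoff, dif_neg h]

lemma stopPayoff_eq_targetPayoff (S : Set 𝕏) :
    stopPayoff δ f S = targetPayoff δ f (fun _ => S) := by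
  funext ω
  by_cases h : ∃ t, ω ∈ firstHit (fun _ => S) t
  · obtain ⟨t, ht⟩ := h
    have hit : hitTime S ω = t := by
      refine le_antisymm (sInf_le ⟨t, rfl, ht.1, ht.2.1⟩) (le_sInf ?_)
      rintro _ ⟨s, rfl, hs, hm⟩
      by_contra hlt
      exact ht.2.2 s hs (by simpa using hlt) hm
    rw [targetPayoff_of_firstHit ht, stopPayoff, hit]
    simp
  · have hit : hitTime S ω = ⊤ := by
      refine sInf_eq_top.2 ?_
      rintro _ ⟨s, rfl, hs, hm⟩
      exact absurd (exists_firstHit (D := fun _ => S) hs hm) h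
    rw [targetPayoff_of_never h, stopPayoff, if_pos hit]

lemma targetPayoff_nonneg (hδ : ∀ k, 0 ≤ δ k) (hf : ∀ x, 0 ≤ f x) :
    0 ≤ targetPayoff δ f D ω := by
  by_cases h : ∃ t, ω ∈ firstHit D t
  · obtain ⟨t, ht⟩ := h
    rw [targetPayoff_of_firstHit ht]
    exact mul_nonneg (hδ t) (hf _)
  · rw [targetPayoff_of_never h]

/-- A payoff which is not collected before time `N` is at most `δ N` times the bound of `f`. -/
lemma targetPayoff_le_tail {C : ℝ} (hδ : ∀ k, 0 ≤ δ k) (hanti : Antitone δ) (hf : ∀ x, 0 ≤ f x)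
    (hC : ∀ x, f x ≤ C) {N : ℕ} (hN : ∀ s, 1 ≤ s → s < N → ω s ∉ D s) :
    targetPayoff δ f D ω ≤ δ N * C := by
  by_cases h : ∃ t, ω ∈ firstHit D t
  · obtain ⟨t, ht⟩ := h
    rw [targetPayoff_of_firstHit ht]
    have hNt : N ≤ t := by
      by_contra hlt
      exact hN t ht.1 (not_le.1 hlt) ht.2.1
    exact mul_le_mul (hanti hNt) (hC _) (hf _) (hδ N)
  · rw [targetPayoff_of_never h]
    exact mul_nonneg (hδ N) ((hf (ω 0)).trans (hC _))

lemma abs_targetPayoff_le {C : ℝ} (hδ : ∀ k, 0 ≤ δ k) (hanti : Antitone δ) (hf : ∀ x, 0 ≤ f x)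
    (hC : ∀ x, f x ≤ C) : |targetPayoff δ f D ω| ≤ δ 0 * C := by
  rw [abs_of_nonneg (targetPayoff_nonneg hδ hf)]
  exact targetPayoff_le_tail hδ hanti hf hC (by simp)

/-- The payoff of a decreasing sequence of targets converges to the payoff of the intersection:
up to any fixed time, the path eventually hits the `n`-th target only where it hits the
intersection, and what is collected late is negligible because `δ` tends to `0`. -/
lemma tendsto_targetPayoff_iInter {C : ℝ} (hδ : ∀ k, 0 ≤ δ k) (hanti : Antitone δ)
    (hlim : Tendsto δ atTop (𝓝 0)) (hf : ∀ x, 0 ≤ f x) (hC : ∀ x, f x ≤ C)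
    {U : ℕ → Set 𝕏} (hU : Antitone U) (ω : ℕ → 𝕏) :
    Tendsto (fun n => targetPayoff δ f (fun _ => U n) ω) atTop
      (𝓝 (targetPayoff δ f (fun _ => ⋂ n, U n) ω)) := by
  have hev : ∀ N, ∀ᶠ n in atTop, ∀ s < N, ω s ∉ ⋂ n, U n → ω s ∉ U n := by
    intro N
    refine (eventually_all_finite (finite_lt_nat N)).2 fun s _ => ?_
    by_cases hs : ω s ∈ ⋂ n, U n
    · exact Eventually.of_forall fun n h => absurd hs h
    · obtain ⟨m, hm⟩ := by simpa using hs
      filter_upwards [eventually_ge_atTop m] with n hn _ h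
      exact hm (hU hn h)
  by_cases h : ∃ t, ω ∈ firstHit (fun _ => ⋂ n, U n) t
  · obtain ⟨t, ht⟩ := h
    rw [targetPayoff_of_firstHit ht]
    refine tendsto_const_nhds.congr' ?_
    filter_upwards [hev t] with n hn
    refine (targetPayoff_of_firstHit (D := fun _ => U n) ⟨ht.1, mem_iInter.1 ht.2.1 n, ?_⟩).symm
    exact fun s h1 hs => hn s hs (ht.2.2 s h1 hs)
  · have hno : ∀ s, 1 ≤ s → ω s ∉ ⋂ n, U n := fun s h1 hs =>
      h (exists_firstHit (D := fun _ => ⋂ n, U n) h1 hs)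
    rw [targetPayoff_of_never h]
    have hlim' : Tendsto (fun N => δ N * C) atTop (𝓝 0) := by simpa using hlim.mul_const C
    refine tendsto_order.2 ⟨fun a ha => Eventually.of_forall fun n =>
      ha.trans_le (targetPayoff_nonneg hδ hf), fun a ha => ?_⟩
    obtain ⟨N, hN⟩ := (hlim'.eventually_lt_const ha).exists
    filter_upwards [hev N] with n hn
    exact (targetPayoff_le_tail hδ hanti hf hC
      fun s h1 hs => hn s hs (hno s h1)).trans_lt hN

lemma measurable_targetPayoff [MeasurableSpace 𝕏] (hf : Measurable f)
    (hD : ∀ t, MeasurableSet (D t)) : Measurable (targetPayoff δ f D) := by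
  have hE : ∀ t, MeasurableSet (firstHit D t) := by
    intro t
    have : firstHit D t = {ω | 1 ≤ t} ∩ ((fun ω => ω t) ⁻¹' D t ∩
        ⋂ s, ⋂ (_ : 1 ≤ s), ⋂ (_ : s < t), ((fun ω : ℕ → 𝕏 => ω s) ⁻¹' D s)ᶜ) := by
      ext ω
      simp [firstHit]
    rw [this]
    exact (MeasurableSet.const _).inter ((measurable_pi_apply t (hD t)).inter
      (.iInter fun s => .iInter fun _ => .iInter fun _ => (measurable_pi_apply s (hD s)).compl))
  intro A hA
  have : targetPayoff δ f D ⁻¹' A =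
      (⋃ t, firstHit D t ∩ (fun ω => δ t * f (ω t)) ⁻¹' A) ∪
        ((⋃ t, firstHit D t)ᶜ ∩ {_ω | (0 : ℝ) ∈ A}) := by
    ext ω
    by_cases h : ∃ t, ω ∈ firstHit D t
    · obtain ⟨t, ht⟩ := h
      have huniq : ∀ i, ω ∈ firstHit D i → i = t := fun i hi => firstHit_unique hi ht
      simp only [mem_preimage, targetPayoff_of_firstHit ht, mem_union, mem_iUnion, mem_inter_iff,
        mem_compl_iff]
      constructor
      · exact fun hm => Or.inl ⟨t, ht, hm⟩
      · rintro (⟨i, hi, hm⟩ | ⟨hn, _⟩)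
        · rwa [huniq i hi] at hm
        · exact absurd ⟨t, ht⟩ hn
    · have h' := not_exists.1 h
      simp [targetPayoff_of_never h, h']
  rw [this]
  refine (MeasurableSet.iUnion fun t => (hE t).inter ?_).union
    ((MeasurableSet.iUnion hE).compl.inter (.const _))
  exact ((hf.comp (measurable_pi_apply t)).const_mul (δ t)) hA

end Payoff

/-! ### Shrinking the target from `S` to `Θ S` -/

section Improvement

variable {𝕏 : Type*}

/-- The target which is the smaller set `R` before time `N` and the larger set `S` from time `N`
on. It interpolates between the targets `S` (for `N = 1`) and `R` (as `N → ∞`). -/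
def switchTarget (R S : Set 𝕏) (N t : ℕ) : Set 𝕏 := {x | (t < N → x ∈ R) ∧ (N ≤ t → x ∈ S)}

/-- The event that the path avoids `R` at the times `1, …, N - 1` and is in `S \ R` at time `N`:
for `R ⊆ S` and `1 ≤ N` it is the event on which the first hits of `switchTarget R S N` and
`switchTarget R S (N + 1)` differ. -/
def switchEvent (R S : Set 𝕏) (N : ℕ) : Set (ℕ → 𝕏) :=
  {ω | (∀ s, 1 ≤ s → s < N → ω s ∉ R) ∧ ω N ∈ S ∧ ω N ∉ R}

variable {δ : ℕ → ℝ} {f : 𝕏 → ℝ} {R S : Set 𝕏} {N : ℕ} {ω : ℕ → 𝕏}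

lemma mem_switchTarget_lt {t : ℕ} {x : 𝕏} (h : t < N) : x ∈ switchTarget R S N t ↔ x ∈ R := by
  simp [switchTarget, h, not_le.2 h]

lemma mem_switchTarget_ge {t : ℕ} {x : 𝕏} (h : N ≤ t) : x ∈ switchTarget R S N t ↔ x ∈ S := by
  simp [switchTarget, h, not_lt.2 h]

lemma targetPayoff_switch_of_notMem (hRS : R ⊆ S) (hω : ω ∉ switchEvent R S N) :
    targetPayoff δ f (switchTarget R S N) ω = targetPayoff δ f (switchTarget R S (N + 1)) ω := by
  have hne : ∀ s, s ≠ N → (ω s ∈ switchTarget R S N s ↔ ω s ∈ switchTarget R S (N + 1) s) := by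
    intro s hs
    rcases lt_or_gt_of_ne hs with h | h
    · rw [mem_switchTarget_lt h, mem_switchTarget_lt (by omega)]
    · rw [mem_switchTarget_ge h.le, mem_switchTarget_ge (by omega)]
  have hsub : ∀ s, ω s ∈ switchTarget R S (N + 1) s → ω s ∈ switchTarget R S N s := by
    intro s hs
    by_cases h : s = N
    · subst h
      rw [mem_switchTarget_lt (by omega)] at hs
      exact (mem_switchTarget_ge le_rfl).2 (hRS hs)
    · exact (hne s h).2 hs
  by_cases h : ∃ t, ω ∈ firstHit (switchTarget R S N) t
  · obtain ⟨t, ht⟩ := h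
    have ht' : ω ∈ firstHit (switchTarget R S (N + 1)) t := by
      refine ⟨ht.1, ?_, fun s h1 hs hm => ht.2.2 s h1 hs (hsub s hm)⟩
      by_cases h : t = N
      · subst h
        rw [mem_switchTarget_lt (by omega)]
        by_contra hR
        exact hω ⟨fun s h1 hs hm => ht.2.2 s h1 hs ((mem_switchTarget_lt hs).2 hm),
          (mem_switchTarget_ge le_rfl).1 ht.2.1, hR⟩
      · exact (hne t h).1 ht.2.1
    rw [targetPayoff_of_firstHit ht, targetPayoff_of_firstHit ht']
  · rw [targetPayoff_of_never h, targetPayoff_of_never]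
    rintro ⟨t, ht⟩
    exact h (exists_firstHit ht.1 (hsub t ht.2.1))

lemma targetPayoff_switch_of_mem (hN : 1 ≤ N) (hω : ω ∈ switchEvent R S N) :
    targetPayoff δ f (switchTarget R S N) ω = δ N * f (ω N) :=
  targetPayoff_of_firstHit ⟨hN, (mem_switchTarget_ge le_rfl).2 hω.2.1,
    fun s h1 hs hm => hω.1 s h1 hs ((mem_switchTarget_lt hs).1 hm)⟩

/-- On the switching event the next target is hit when the path shifted by `N` first hits `S`, so
decreasing impatience bounds the payoff below by `δ N` times the payoff of the shifted path. -/
lemma le_targetPayoff_switch_succ (hδ : ∀ k, 0 ≤ δ k) (hf : ∀ x, 0 ≤ f x)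
    (hDI : ∀ i j : ℕ, δ i * δ j ≤ δ (i + j)) (hω : ω ∈ switchEvent R S N) :
    δ N * targetPayoff δ f (fun _ => S) (fun j => ω (N + j)) ≤
      targetPayoff δ f (switchTarget R S (N + 1)) ω := by
  by_cases h : ∃ t, (fun j => ω (N + j)) ∈ firstHit (fun _ => S) t
  · obtain ⟨t, ht⟩ := h
    have ht' : ω ∈ firstHit (switchTarget R S (N + 1)) (N + t) := by
      refine ⟨ht.1.trans (Nat.le_add_left t N),
        (mem_switchTarget_ge (by have := ht.1; omega)).2 ht.2.1, fun s h1 hs hm => ?_⟩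
      rcases lt_trichotomy s N with hlt | rfl | hgt
      · exact hω.1 s h1 hlt ((mem_switchTarget_lt (by omega)).1 hm)
      · exact hω.2.2 ((mem_switchTarget_lt (by omega)).1 hm)
      · refine ht.2.2 (s - N) (by omega) (by omega) ?_
        have hm' := (mem_switchTarget_ge (by omega)).1 hm
        simpa [Nat.add_sub_cancel' hgt.le] using hm'
    rw [targetPayoff_of_firstHit ht, targetPayoff_of_firstHit ht', ← mul_assoc]
    exact mul_le_mul_of_nonneg_right (hDI N t) (hf _)
  · rw [targetPayoff_of_never h, mul_zero]
    exact targetPayoff_nonneg hδ hf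

variable [MeasurableSpace 𝕏]

lemma measurableSet_switchTarget (hR : MeasurableSet R) (hS : MeasurableSet S) (N t : ℕ) :
    MeasurableSet (switchTarget R S N t) := by
  rcases lt_or_ge t N with h | h
  · have : switchTarget R S N t = R := by ext; exact mem_switchTarget_lt h
    rwa [this]
  · have : switchTarget R S N t = S := by ext; exact mem_switchTarget_ge h
    rwa [this]

lemma measurableSet_switchEvent (hR : MeasurableSet R) (hS : MeasurableSet S) (N : ℕ) :
    MeasurableSet[pathSigma 𝕏 N] (switchEvent R S N) := by
  have : switchEvent R S N = (⋂ s ∈ {s : ℕ | 1 ≤ s ∧ s < N}, (fun ω : ℕ → 𝕏 => ω s) ⁻¹' Rᶜ) ∩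
      (fun ω : ℕ → 𝕏 => ω N) ⁻¹' (S \ R) := by
    ext ω
    simp [switchEvent]
  rw [this]
  refine MeasurableSet.inter (MeasurableSet.biInter (Set.to_countable _) fun s hs => ?_) ?_
  · exact measurable_coord_pathSigma hs.2.le hR.compl
  · exact measurable_coord_pathSigma le_rfl (hS.diff hR)

variable {Pr : Kernel 𝕏 (ℕ → 𝕏)}

lemma measurable_valJ (hf : Measurable f) (hS : MeasurableSet S) :
    Measurable (valJ Pr δ f S) := by
  unfold valJ
  rw [stopPayoff_eq_targetPayoff]
  exact (measurable_targetPayoff hf fun _ => hS).stronglyMeasurable.integral_kernel.measurable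

lemma measurableSet_Θ (hf : Measurable f) (hS : MeasurableSet S) :
    MeasurableSet (Θ Pr δ f S) :=
  measurableSet_le (measurable_valJ hf hS) hf

/-- Moving the switching time from `N` to `N + 1` does not decrease the expected payoff: where the
two differ, the chain is in `S` but outside `Θ S` at time `N`, so continuing to the next visit of
`S` is better than stopping, also as seen from time `0` by decreasing impatience. -/
lemma integral_switch_le_succ [IsMarkovKernel Pr] {Q : Kernel 𝕏 𝕏}
    (hchain : IsMarkovChainLaw Pr Q) {C : ℝ} (hfm : Measurable f) (hf : ∀ x, 0 ≤ f x)
    (hC : ∀ x, f x ≤ C) (hδ : ∀ k, 0 ≤ δ k) (hanti : Antitone δ)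
    (hDI : ∀ i j : ℕ, δ i * δ j ≤ δ (i + j)) (hS : MeasurableSet S)
    (hΘS : Θ Pr δ f S ⊆ S) (hN : 1 ≤ N) (x : 𝕏) :
    ∫ ω, targetPayoff δ f (switchTarget (Θ Pr δ f S) S N) ω ∂(Pr x) ≤
      ∫ ω, targetPayoff δ f (switchTarget (Θ Pr δ f S) S (N + 1)) ω ∂(Pr x) := by
  have hR : MeasurableSet (Θ Pr δ f S) := measurableSet_Θ hfm hS
  set R := Θ Pr δ f S with hRdef
  have hB := measurableSet_switchEvent hR hS N
  have hBm := pathSigma_le N _ hB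
  have hint : ∀ D : ℕ → Set 𝕏, (∀ t, MeasurableSet (D t)) →
      Integrable (targetPayoff δ f D) (Pr x) := fun D hD =>
    Integrable.of_bound (measurable_targetPayoff hfm hD).aestronglyMeasurable (δ 0 * C)
      (ae_of_all _ fun ω => abs_targetPayoff_le hδ hanti hf hC)
  have hi := hint _ (measurableSet_switchTarget hR hS N)
  have hi' := hint _ (measurableSet_switchTarget hR hS (N + 1))
  rw [← integral_add_compl hBm hi, ← integral_add_compl hBm hi']
  refine add_le_add ?_ (le_of_eq ?_)
  · have hm := measurable_targetPayoff (δ := δ) hfm (D := fun _ => S) fun _ => hS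
    have hθ : Measurable (fun (ω : ℕ → 𝕏) (j : ℕ) => ω (N + j)) :=
      measurable_pi_lambda _ fun j => measurable_pi_apply _
    have hJb : ∀ y, ‖valJ Pr δ f S y‖ ≤ δ 0 * C := by
      intro y
      rw [valJ, stopPayoff_eq_targetPayoff]
      simpa using norm_integral_le_of_norm_le_const (μ := Pr y) (f := targetPayoff δ f fun _ => S)
        (ae_of_all _ fun ω => abs_targetPayoff_le hδ hanti hf hC)
    calc ∫ ω in switchEvent R S N, targetPayoff δ f (switchTarget R S N) ω ∂(Pr x)
        ≤ ∫ ω in switchEvent R S N, δ N * valJ Pr δ f S (ω N) ∂(Pr x) := by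
          refine setIntegral_mono_on hi.integrableOn ?_ hBm fun ω hω => ?_
          · have hJm : Measurable fun ω : ℕ → 𝕏 => valJ Pr δ f S (ω N) :=
              (measurable_valJ hfm hS).comp (measurable_pi_apply N)
            exact (Integrable.of_bound hJm.aestronglyMeasurable (δ 0 * C)
              (ae_of_all _ fun ω => hJb (ω N))).const_mul _
          · rw [targetPayoff_switch_of_mem hN hω]
            exact mul_le_mul_of_nonneg_left (not_le.1 hω.2.2).le (hδ N)
      _ = ∫ ω in switchEvent R S N,
            δ N * targetPayoff δ f (fun _ => S) (fun j => ω (N + j)) ∂(Pr x) := by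
          rw [integral_const_mul, integral_const_mul, setIntegral_shift hchain x N hB hm
            (fun ω => abs_targetPayoff_le hδ hanti hf hC)]
          simp only [valJ, stopPayoff_eq_targetPayoff]
      _ ≤ ∫ ω in switchEvent R S N, targetPayoff δ f (switchTarget R S (N + 1)) ω ∂(Pr x) := by
          refine setIntegral_mono_on ?_ hi'.integrableOn hBm fun ω hω =>
            le_targetPayoff_switch_succ hδ hf hDI hω
          exact (Integrable.of_bound (hm.comp hθ).aestronglyMeasurable (δ 0 * C)
            (ae_of_all _ fun ω => abs_targetPayoff_le hδ hanti hf hC)).const_mul _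
  · exact setIntegral_congr_fun hBm.compl fun ω hω => targetPayoff_switch_of_notMem hΘS hω

/-- If `Θ S ⊆ S`, then waiting for the smaller set `Θ S` is at least as good as waiting for `S`,
from every starting point. -/
lemma valJ_le_valJ_Θ [IsMarkovKernel Pr] {Q : Kernel 𝕏 𝕏}
    (hchain : IsMarkovChainLaw Pr Q) {C : ℝ} (hfm : Measurable f) (hf : ∀ x, 0 ≤ f x)
    (hC : ∀ x, f x ≤ C) (hδ : ∀ k, 0 ≤ δ k) (hanti : Antitone δ)
    (hlim : Tendsto δ atTop (𝓝 0))
    (hDI : ∀ i j : ℕ, δ i * δ j ≤ δ (i + j)) (hS : MeasurableSet S)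
    (hΘS : Θ Pr δ f S ⊆ S) (x : 𝕏) :
    valJ Pr δ f S x ≤ valJ Pr δ f (Θ Pr δ f S) x := by
  have hR : MeasurableSet (Θ Pr δ f S) := measurableSet_Θ hfm hS
  set R := Θ Pr δ f S with hRdef
  have hint : ∀ D : ℕ → Set 𝕏, (∀ t, MeasurableSet (D t)) →
      Integrable (targetPayoff δ f D) (Pr x) := fun D hD =>
    Integrable.of_bound (measurable_targetPayoff hfm hD).aestronglyMeasurable (δ 0 * C)
      (ae_of_all _ fun ω => abs_targetPayoff_le hδ hanti hf hC)
  have hstart : valJ Pr δ f S x =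
      ∫ ω, targetPayoff δ f (switchTarget R S 1) ω ∂(Pr x) := by
    rw [valJ, stopPayoff_eq_targetPayoff]
    congr 1 with ω
    by_cases h : ∃ t, ω ∈ firstHit (fun _ => S) t
    · obtain ⟨t, ht⟩ := h
      rw [targetPayoff_of_firstHit ht, targetPayoff_of_firstHit ⟨ht.1,
        (mem_switchTarget_ge ht.1).2 ht.2.1,
        fun s h1 hs hm => ht.2.2 s h1 hs ((mem_switchTarget_ge h1).1 hm)⟩]
    · rw [targetPayoff_of_never h, targetPayoff_of_never]
      rintro ⟨t, ht⟩
      exact h (exists_firstHit (D := fun _ => S) ht.1 ((mem_switchTarget_ge ht.1).1 ht.2.1))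
  have hmono : ∀ N, valJ Pr δ f S x ≤
      ∫ ω, targetPayoff δ f (switchTarget R S (N + 1)) ω ∂(Pr x) := by
    intro N
    induction N with
    | zero => exact hstart.le
    | succ N ih =>
      exact ih.trans (integral_switch_le_succ hchain hfm hf hC hδ hanti hDI hS hΘS (by omega) x)
  have hpt : ∀ N ω, targetPayoff δ f (switchTarget R S N) ω ≤
      targetPayoff δ f (fun _ => R) ω + δ N * C := by
    intro N ω
    have h0 : 0 ≤ δ N * C := mul_nonneg (hδ N) ((hf x).trans (hC x))
    by_cases h : ∃ t, t < N ∧ ω ∈ firstHit (fun _ => R) t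
    · obtain ⟨t, htN, ht⟩ := h
      have ht' : ω ∈ firstHit (switchTarget R S N) t :=
        ⟨ht.1, (mem_switchTarget_lt htN).2 ht.2.1,
          fun s h1 hs hm => ht.2.2 s h1 hs ((mem_switchTarget_lt (hs.trans htN)).1 hm)⟩
      rw [targetPayoff_of_firstHit ht, targetPayoff_of_firstHit ht']
      linarith
    · have htail := targetPayoff_le_tail (δ := δ) (f := f) (D := switchTarget R S N) (ω := ω)
        (N := N) hδ hanti hf hC (fun s h1 hs hm => by
          have hmR : ω s ∈ R := (mem_switchTarget_lt hs).1 hm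
          obtain ⟨t, ht⟩ := exists_firstHit (D := fun _ => R) h1 hmR
          refine h ⟨t, lt_of_le_of_lt ?_ hs, ht⟩
          by_contra hlt
          exact ht.2.2 s h1 (not_le.1 hlt) hmR)
      have := targetPayoff_nonneg (D := fun _ => R) (ω := ω) hδ hf
      linarith
  have hle : ∀ N, valJ Pr δ f S x ≤ valJ Pr δ f R x + δ (N + 1) * C := by
    intro N
    refine (hmono N).trans ((integral_mono (hint _ (measurableSet_switchTarget hR hS _))
      ((hint _ fun _ => hR).add (integrable_const _)) (hpt (N + 1))).trans (le_of_eq ?_))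
    rw [valJ, stopPayoff_eq_targetPayoff]
    simp only [Pi.add_apply]
    rw [integral_add (hint _ fun _ => hR) (integrable_const _)]
    simp
  have hl : Tendsto (fun N => valJ Pr δ f R x + δ (N + 1) * C) atTop
      (𝓝 (valJ Pr δ f R x + 0 * C)) :=
    (((tendsto_add_atTop_iff_nat 1).2 hlim).mul_const C).const_add _
  rw [zero_mul, add_zero] at hl
  exact ge_of_tendsto' hl hle

end Improvement

/-! ### The limit of the iterates -/

/-- Under decreasing impatience, if `Θ(S) ⊆ S` for a nonempty Borel set `S`, then
`S_∞ = ⋂_{n ≥ 1} Θⁿ(S)` is nonempty and is an equilibrium. -/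
theorem iterate_limit_equilibrium
    {𝕏 : Type*} [TopologicalSpace 𝕏] [PolishSpace 𝕏] [MeasurableSpace 𝕏] [BorelSpace 𝕏]
    (Pr : Kernel 𝕏 (ℕ → 𝕏)) [IsMarkovKernel Pr] (Q : Kernel 𝕏 𝕏) [IsMarkovKernel Q]
    (hchain : IsMarkovChainLaw Pr Q)
    (f : 𝕏 → ℝ) (hf_meas : Measurable f) (hf_nonneg : ∀ x, 0 ≤ f x)
    (hf_bdd : ∃ C : ℝ, ∀ x, f x ≤ C)
    (δ : ℕ → ℝ) (hδ_mem : ∀ k, δ k ∈ Set.Icc (0 : ℝ) 1) (hδ_anti : StrictAnti δ)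
    (hδ_zero : δ 0 = 1) (hδ_lim : Tendsto δ atTop (𝓝 0))
    (hDI : ∀ i j : ℕ, δ i * δ j ≤ δ (i + j))
    (S : Set 𝕏) (hS : MeasurableSet S) (hSne : S.Nonempty) (hΘS : Θ Pr δ f S ⊆ S) :
    (⋂ n : ℕ, (Θ Pr δ f)^[n + 1] S).Nonempty ∧
    IsEquilibrium Pr δ f (⋂ n : ℕ, (Θ Pr δ f)^[n + 1] S) := by
  obtain ⟨C, hC⟩ := hf_bdd
  have hδ : ∀ k, 0 ≤ δ k := fun k => (hδ_mem k).1
  have hanti := hδ_anti.antitone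
  have hsucc : ∀ n, (Θ Pr δ f)^[n + 1] S = Θ Pr δ f ((Θ Pr δ f)^[n] S) := fun n =>
    Function.iterate_succ_apply' _ _ _
  have hmeas : ∀ n, MeasurableSet ((Θ Pr δ f)^[n] S) := by
    intro n
    induction n with
    | zero => exact hS
    | succ n ih => rw [hsucc]; exact measurableSet_Θ hf_meas ih
  have hsub : ∀ n, Θ Pr δ f ((Θ Pr δ f)^[n] S) ⊆ (Θ Pr δ f)^[n] S := by
    intro n
    induction n with
    | zero => exact hΘS
    | succ n ih =>
      rw [hsucc]
      intro x hx
      exact (valJ_le_valJ_Θ hchain hf_meas hf_nonneg hC hδ hanti hδ_lim hDI (hmeas n) ih x).trans hx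
  set U : ℕ → Set 𝕏 := fun n => (Θ Pr δ f)^[n + 1] S with hU
  have hUsucc : ∀ n, U (n + 1) = Θ Pr δ f (U n) := fun n => hsucc (n + 1)
  have hUanti : Antitone U := antitone_nat_of_succ_le fun n => by
    rw [hUsucc]; exact hsub (n + 1)
  have hUmeas : ∀ n, MeasurableSet (U n) := fun n => hmeas (n + 1)
  have hJmono : ∀ x, Monotone fun n => valJ Pr δ f (U n) x := fun x =>
    monotone_nat_of_le_succ fun n => by
      rw [hUsucc]
      exact valJ_le_valJ_Θ hchain hf_meas hf_nonneg hC hδ hanti hδ_lim hDI (hUmeas n)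
        (hsub (n + 1)) x
  have hJlim : ∀ x, Tendsto (fun n => valJ Pr δ f (U n) x) atTop
      (𝓝 (valJ Pr δ f (⋂ n, U n) x)) := by
    intro x
    simp only [valJ, stopPayoff_eq_targetPayoff]
    exact tendsto_integral_of_dominated_convergence (fun _ => δ 0 * C)
      (fun n => (measurable_targetPayoff hf_meas fun _ => hUmeas n).aestronglyMeasurable)
      (integrable_const _)
      (fun n => ae_of_all _ fun ω => abs_targetPayoff_le hδ hanti hf_nonneg hC)
      (ae_of_all _ fun ω => tendsto_targetPayoff_iInter hδ hanti hδ_lim hf_nonneg hC hUanti ω)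
  have hfix : Θ Pr δ f (⋂ n, U n) = ⋂ n, U n := by
    ext x
    rw [mem_iInter]
    constructor
    · intro hx n
      have hmem : x ∈ U (n + 1) := by
        rw [hUsucc]
        exact ((hJmono x).ge_of_tendsto (hJlim x) n).trans hx
      exact hUanti (Nat.le_succ n) hmem
    · intro hx
      refine le_of_tendsto' (hJlim x) fun n => ?_
      have hmem := hx (n + 1)
      rw [hUsucc] at hmem
      exact hmem
  refine ⟨?_, MeasurableSet.iInter hUmeas, hfix⟩
  -- The empty set is not a fixed point: it is never hit, so stopping, which pays `f ≥ 0`, is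
  -- optimal everywhere.
  by_contra hempty
  rw [not_nonempty_iff_eq_empty] at hempty
  rw [hempty] at hfix
  obtain ⟨x, -⟩ := hSne
  have hx : x ∈ Θ Pr δ f ∅ := by
    have hJ : valJ Pr δ f ∅ x = 0 := by simp [valJ, stopPayoff, hitTime]
    change valJ Pr δ f ∅ x ≤ f x
    rw [hJ]
    exact hf_nonneg x
  rw [hfix] at hx
  exact hx

end
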